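/- Let G and G' be achievement positional games on disjoint vertex sets. If o(G)=L^- and o(G')=R^-, then o(G∪G')∈{L^-, N, R^-}. -/

import Mathlib

namespace APG

/-- The two players: Left and Right. -/
inductive Player : Type
  | L : Player
  | R : Player
deriving DecidableEq, Repr

/-- The opponent of a player. -/
def Player.other : Player → Player
  | .L => .R
  | .R => .L

/-- An achievement positional game: a finite vertex set together with the set of
blue edges (Left's winning sets) and the set of red edges (Right's winning sets). -/
structure Game : Type where
  V : Finset ℕ
  EL : Finset (Finset ℕ)
  ER : Finset (Finset ℕ)

/-- The edges are nonempty subsets of the vertex set. -/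
def WellFormed (G : Game) : Prop :=
  (∀ e ∈ G.EL, e ⊆ G.V ∧ e.Nonempty) ∧ (∀ e ∈ G.ER, e ⊆ G.V ∧ e.Nonempty)

/-- The winning sets of a given player. -/
def Game.edges (G : Game) : Player → Finset (Finset ℕ)
  | .L => G.EL
  | .R => G.ER

/-- The player who makes the `i`-th move (0-indexed) when `s` moves first. -/
def mover (s : Player) (i : ℕ) : Player := if i % 2 = 0 then s else s.other

/-- The set of vertices picked by player `p` along the history `h`
(the chronological list of the moves played so far), when `s` moved first. -/
def picked (s p : Player) (h : List ℕ) : Finset ℕ :=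
  ((Finset.range h.length).filter fun i => mover s i = p).image fun i => h.getD i 0

/-- The set `S` of picked vertices fills some edge of `E`. -/
def fills (E : Finset (Finset ℕ)) (S : Finset ℕ) : Prop := ∃ e ∈ E, e ⊆ S

/-- The game is over: some player has picked all the vertices of one of their edges. -/
def ended (G : Game) (s : Player) (h : List ℕ) : Prop :=
  fills G.EL (picked s .L h) ∨ fills G.ER (picked s .R h)

/-- `h` is a legal history: no vertex is picked twice, every picked vertex belongs to
the board, and no move is made after the game has ended. -/
def ValidHist (G : Game) (s : Player) (h : List ℕ) : Prop :=
  h.Nodup ∧ (∀ x ∈ h, x ∈ G.V) ∧ ∀ k, k < h.length → ¬ ended G s (h.take k)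

/-- A strategy: a map assigning to each position (history) a vertex to pick. -/
abbrev Strategy := List ℕ → ℕ

/-- Along `h`, every move of player `p` agrees with the strategy `σ`. -/
def Follows (s p : Player) (σ : Strategy) (h : List ℕ) : Prop :=
  ∀ k, k < h.length → mover s k = p → h.getD k 0 = σ (h.take k)

/-- A finished play: either the game has ended or all vertices have been picked. -/
def Complete (G : Game) (s : Player) (h : List ℕ) : Prop :=
  ended G s h ∨ h.length = G.V.card

/-- The strategy `σ` of player `p` always suggests a legal move (an unpicked vertex)
whenever the game is not over and it is `p`'s turn. -/
def Legal (G : Game) (s p : Player) (σ : Strategy) : Prop :=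
  ∀ h, ValidHist G s h → Follows s p σ h → ¬ ended G s h → h.length < G.V.card →
    mover s h.length = p → σ h ∈ G.V ∧ σ h ∉ h

/-- Player `p` has a winning strategy on `G` when `s` moves first: following it,
every finished play ends with `p` having filled one of their edges (and, the game
having ended right there, the opponent has not filled an edge first). -/
def WinsAs (G : Game) (s p : Player) : Prop :=
  ∃ σ : Strategy, Legal G s p σ ∧
    ∀ h, ValidHist G s h → Follows s p σ h → Complete G s h →
      fills (G.edges p) (picked s p h)

/-- Player `p` has a non-losing strategy on `G` when `s` moves first: following it,
the opponent never fills one of their edges. -/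
def NonLosingAs (G : Game) (s p : Player) : Prop :=
  ∃ σ : Strategy, Legal G s p σ ∧
    ∀ h, ValidHist G s h → Follows s p σ h → Complete G s h →
      ¬ fills (G.edges p.other) (picked s p.other h)

/-- The possible results of the game, for a fixed starting player. -/
inductive Result : Type
  | Lwin : Result
  | draw : Result
  | Rwin : Result
deriving DecidableEq, Repr

/-- The result of `G` with optimal play, when `s` moves first, is `r`:
a win for a player means that player has a winning strategy, a draw means
both players have non-losing strategies. -/
def resultIs (G : Game) (s : Player) : Result → Prop
  | .Lwin => WinsAs G s .L
  | .Rwin => WinsAs G s .R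
  | .draw => NonLosingAs G s .L ∧ NonLosingAs G s .R

/-- An outcome: the pair of results with optimal play
(when Left starts, when Right starts). -/
abbrev Outcome := Result × Result

/-- `G` has outcome `o`. -/
def hasOutcome (G : Game) (o : Outcome) : Prop :=
  resultIs G .L o.1 ∧ resultIs G .R o.2

/-- Numerical value of a result, from Left's point of view:
Right wins < draw < Left wins. -/
def Result.val : Result → ℕ
  | .Rwin => 0
  | .draw => 1
  | .Lwin => 2

/-- The partial order `≤_L` on outcomes, comparing both components simultaneously
from Left's point of view. -/
def outLE (o o' : Outcome) : Prop := o.1.val ≤ o'.1.val ∧ o.2.val ≤ o'.2.val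

def oL : Outcome := (.Lwin, .Lwin)
def oLminus : Outcome := (.Lwin, .draw)
def oN : Outcome := (.Lwin, .Rwin)
def oD : Outcome := (.draw, .draw)
def oRminus : Outcome := (.draw, .Rwin)
def oR : Outcome := (.Rwin, .Rwin)

/-- The updated game `G_u` after Left has picked `u`. -/
def subL (G : Game) (u : ℕ) : Game where
  V := G.V.erase u
  EL := G.EL.image fun e => e.erase u
  ER := G.ER.filter fun e => u ∉ e

/-- The updated game `G^u` after Right has picked `u`. -/
def subR (G : Game) (u : ℕ) : Game where
  V := G.V.erase u
  EL := G.EL.filter fun e => u ∉ e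
  ER := G.ER.image fun e => e.erase u

/-- The updated game `G_u^v` after Left has picked `u` and Right has picked `v`. -/
def updLR (G : Game) (u v : ℕ) : Game where
  V := (G.V.erase u).erase v
  EL := (G.EL.filter fun e => v ∉ e).image fun e => e.erase u
  ER := (G.ER.filter fun e => u ∉ e).image fun e => e.erase v

/-- The disjoint union of two games. -/
def gunion (G G' : Game) : Game where
  V := G.V ∪ G'.V
  EL := G.EL ∪ G'.EL
  ER := G.ER ∪ G'.ER

@[simp] theorem Player.other_other (p : Player) : p.other.other = p := by cases p <;> rfl

theorem Player.other_ne (p : Player) : p.other ≠ p := by cases p <;> decide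

theorem Player.eq_other_of_ne {p q : Player} (h : q ≠ p) : q = p.other := by
  cases p <;> cases q <;> simp_all [Player.other]

theorem WellFormed.subset_of_mem {G : Game} (hG : WellFormed G) {p : Player} {e : Finset ℕ}
    (he : e ∈ G.edges p) : e ⊆ G.V := by
  cases p
  · exact (hG.1 e he).1
  · exact (hG.2 e he).1

theorem WellFormed.not_fills_empty {G : Game} (hG : WellFormed G) (p : Player) :
    ¬ fills (G.edges p) ∅ := by
  rintro ⟨e, he, hsub⟩
  have hne : e.Nonempty := by
    cases p
    · exact (hG.1 e he).2
    · exact (hG.2 e he).2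
  exact hne.ne_empty (Finset.subset_empty.mp hsub)

/-- Only the picked vertices lying on the board matter. -/
theorem WellFormed.fills_of_inter_subset {G : Game} (hG : WellFormed G) {p : Player}
    {S T : Finset ℕ} (hST : S ∩ G.V ⊆ T) (h : fills (G.edges p) S) : fills (G.edges p) T :=
  let ⟨e, he, heS⟩ := h
  ⟨e, he, (Finset.subset_inter heS (hG.subset_of_mem he)).trans hST⟩

/-- Player `p`, to move, having picked `A` against `B`, can force a win during which the
opponent is allowed to pass, and in which the opponent passes at most `n` times. -/
inductive ForcesWithin (G : Game) (p : Player) : ℕ → Finset ℕ → Finset ℕ → Prop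
  | win {n : ℕ} {A B : Finset ℕ} {v : ℕ} (hB : ¬ fills (G.edges p.other) B)
      (hv : v ∈ G.V) (hvA : v ∉ A) (hvB : v ∉ B) (hfill : fills (G.edges p) (insert v A)) :
      ForcesWithin G p n A B
  | move {n : ℕ} {A B : Finset ℕ} {v : ℕ} (hB : ¬ fills (G.edges p.other) B)
      (hv : v ∈ G.V) (hvA : v ∉ A) (hvB : v ∉ B)
      (hreply : ∀ w ∈ G.V, w ∉ insert v A → w ∉ B →
        ForcesWithin G p (n + 1) (insert v A) (insert w B))
      (hpass : ForcesWithin G p n (insert v A) B) :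
      ForcesWithin G p (n + 1) A B

/-- Player `p`, to move, can force a win even if the opponent may pass. -/
def Forces (G : Game) (p : Player) (A B : Finset ℕ) : Prop := ∃ n, ForcesWithin G p n A B

/-- Player `p` has won, or can force a win with the opponent to move and allowed to pass. -/
def ForcesSecond (G : Game) (p : Player) (A B : Finset ℕ) : Prop :=
  fills (G.edges p) A ∨
    ((∀ w ∈ G.V, w ∉ A → w ∉ B → Forces G p A (insert w B)) ∧ Forces G p A B)

theorem ForcesWithin.not_fills {G : Game} {p : Player} {n : ℕ} {A B : Finset ℕ}
    (h : ForcesWithin G p n A B) : ¬ fills (G.edges p.other) B := by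
  cases h <;> assumption

theorem Forces.not_fills {G : Game} {p : Player} {A B : Finset ℕ}
    (h : Forces G p A B) : ¬ fills (G.edges p.other) B :=
  h.choose_spec.not_fills

theorem mem_of_inter_eq {S T V : Finset ℕ} (h : S ∩ V = T ∩ V) {x : ℕ} (hx : x ∈ V) :
    x ∈ S ↔ x ∈ T := by
  simpa [hx] using Finset.ext_iff.mp h x

/-- Allowing more passes, or removing vertices from the opponent, does not hurt. -/
theorem ForcesWithin.mono {G : Game} (hG : WellFormed G) {p : Player} {n n' : ℕ}
    {A A' B B' : Finset ℕ} (h : ForcesWithin G p n A B) (hn : n ≤ n')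
    (hA : A ∩ G.V = A' ∩ G.V) (hB : B' ∩ G.V ⊆ B) : ForcesWithin G p n' A' B' := by
  induction h generalizing n' A' B' with
  | @win n A B v hF hv hvA hvB hfill =>
    have hvA' : v ∉ A' := fun h => hvA ((mem_of_inter_eq hA hv).mpr h)
    have hvB' : v ∉ B' := fun h => hvB (hB (Finset.mem_inter.mpr ⟨h, hv⟩))
    refine .win (fun h => hF (hG.fills_of_inter_subset hB h)) hv hvA' hvB' ?_
    refine hG.fills_of_inter_subset ?_ hfill
    rw [Finset.insert_inter_of_mem hv, hA]
    exact Finset.insert_subset_insert _ Finset.inter_subset_left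
  | @move n A B v hF hv hvA hvB _ _ ih ihp =>
    have hvA' : v ∉ A' := fun h => hvA ((mem_of_inter_eq hA hv).mpr h)
    have hvB' : v ∉ B' := fun h => hvB (hB (Finset.mem_inter.mpr ⟨h, hv⟩))
    obtain ⟨k, rfl⟩ : ∃ k, n' = k + 1 := ⟨n' - 1, by omega⟩
    have hA' : insert v A ∩ G.V = insert v A' ∩ G.V := by
      rw [Finset.insert_inter_of_mem hv, Finset.insert_inter_of_mem hv, hA]
    refine .move (fun h => hF (hG.fills_of_inter_subset hB h)) hv hvA' hvB'
      (fun w hw hwA hwB => ?_) (ihp (by omega) hA' hB)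
    have hsub : insert w B' ∩ G.V ⊆ insert w B := by
      rw [Finset.insert_inter_of_mem hw]
      exact Finset.insert_subset_insert _ hB
    by_cases hwB' : w ∈ B
    · exact ihp (by omega) hA' (by rwa [Finset.insert_eq_of_mem hwB'] at hsub)
    · exact ih w hw (fun h => hwA ((mem_of_inter_eq hA' hw).mp h)) hwB' hn hA' hsub

theorem Forces.mono {G : Game} (hG : WellFormed G) {p : Player}
    {A A' B B' : Finset ℕ} (h : Forces G p A B)
    (hA : A ∩ G.V = A' ∩ G.V) (hB : B' ∩ G.V ⊆ B) : Forces G p A' B' :=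
  let ⟨n, hn⟩ := h
  ⟨n, hn.mono hG le_rfl hA hB⟩

theorem Forces.exists_move {G : Game} {p : Player} {A B : Finset ℕ} (h : Forces G p A B) :
    ∃ v ∈ G.V, v ∉ A ∧ v ∉ B ∧ ForcesSecond G p (insert v A) B := by
  obtain ⟨n, h⟩ := h
  cases h with
  | win hF hv hvA hvB hfill => exact ⟨_, hv, hvA, hvB, .inl hfill⟩
  | move hF hv hvA hvB hr hp =>
    exact ⟨_, hv, hvA, hvB, .inr ⟨fun w hw hwA hwB => ⟨_, hr w hw hwA hwB⟩, _, hp⟩⟩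

theorem Forces.of_move {G : Game} (hG : WellFormed G) {p : Player} {A B : Finset ℕ} {v : ℕ}
    (hF : ¬ fills (G.edges p.other) B) (hv : v ∈ G.V) (hvA : v ∉ A) (hvB : v ∉ B)
    (h : ForcesSecond G p (insert v A) B) : Forces G p A B := by
  obtain h | ⟨hr, m, hm⟩ := h
  · exact ⟨0, .win hF hv hvA hvB h⟩
  · choose! f hf using hr
    refine ⟨(G.V.sup f + m) + 1, .move hF hv hvA hvB (fun w hw hwA hwB => ?_) ?_⟩
    · refine (hf w hw hwA hwB).mono hG ?_ rfl Finset.inter_subset_left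
      have := Finset.le_sup (f := f) hw
      omega
    · exact hm.mono hG (by omega) rfl Finset.inter_subset_left

/-! ### Histories -/

theorem mover_succ (s : Player) (n : ℕ) : mover s (n + 1) = (mover s n).other := by
  unfold mover
  rcases Nat.mod_two_eq_zero_or_one n with h | h
  · have : (n + 1) % 2 = 1 := by omega
    simp [h, this]
  · have : (n + 1) % 2 = 0 := by omega
    simp [h, this]

theorem picked_concat (s p : Player) (h : List ℕ) (x : ℕ) :
    picked s p (h ++ [x]) =
      if mover s h.length = p then insert x (picked s p h) else picked s p h := by
  have key : ∀ y, y ∈ picked s p (h ++ [x]) ↔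
      (mover s h.length = p ∧ y = x) ∨ y ∈ picked s p h := by
    intro y
    simp only [picked, Finset.mem_image, Finset.mem_filter, Finset.mem_range, List.length_append,
      List.length_singleton]
    constructor
    · rintro ⟨i, ⟨hi, hm⟩, rfl⟩
      by_cases hlt : i < h.length
      · exact .inr ⟨i, ⟨hlt, hm⟩, by rw [List.getD_append _ _ _ _ hlt]⟩
      · obtain rfl : i = h.length := by omega
        exact .inl ⟨hm, by simp⟩
    · rintro (⟨hm, rfl⟩ | ⟨i, ⟨hi, hm⟩, rfl⟩)
      · exact ⟨h.length, ⟨by omega, hm⟩, by simp⟩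
      · exact ⟨i, ⟨by omega, hm⟩, by rw [List.getD_append _ _ _ _ hi]⟩
  ext y
  rw [key]
  split_ifs with hm <;> simp [hm]

@[simp] theorem picked_nil (s p : Player) : picked s p [] = ∅ := by simp [picked]

theorem mem_iff_mem_picked (s p : Player) (h : List ℕ) (x : ℕ) :
    x ∈ h ↔ x ∈ picked s p h ∨ x ∈ picked s p.other h := by
  induction h using List.reverseRecOn with
  | nil => simp
  | append_singleton h y ih =>
    rw [picked_concat, picked_concat, List.mem_append, ih, List.mem_singleton]
    by_cases hm : mover s h.length = p
    · rw [if_pos hm, if_neg (by rw [hm]; exact p.other_ne.symm), Finset.mem_insert]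
      tauto
    · rw [if_neg hm, if_pos (Player.eq_other_of_ne hm), Finset.mem_insert]
      tauto

theorem ended_iff (G : Game) (s p : Player) (h : List ℕ) :
    ended G s h ↔ fills (G.edges p) (picked s p h) ∨
      fills (G.edges p.other) (picked s p.other h) := by
  cases p
  · rfl
  · exact or_comm

theorem ValidHist.concat {G : Game} {s : Player} {h : List ℕ} {x : ℕ} (hv : ValidHist G s h)
    (hend : ¬ ended G s h) (hx : x ∈ G.V) (hxh : x ∉ h) : ValidHist G s (h ++ [x]) := by
  refine ⟨?_, ?_, ?_⟩
  · refine List.nodup_append.mpr ⟨hv.1, List.nodup_singleton x, fun a ha b hb hab => hxh ?_⟩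
    rwa [← List.mem_singleton.mp hb, ← hab]
  · intro y hy
    rcases List.mem_append.mp hy with hy | hy
    · exact hv.2.1 y hy
    · exact List.mem_singleton.mp hy ▸ hx
  · intro k hk
    rw [List.length_append, List.length_singleton] at hk
    rw [List.take_append_of_le_length (by omega)]
    by_cases hlt : k < h.length
    · exact hv.2.2 k hlt
    · rwa [List.take_of_length_le (by omega)]

theorem ValidHist.of_concat {G : Game} {s : Player} {h : List ℕ} {x : ℕ}
    (hv : ValidHist G s (h ++ [x])) :
    ValidHist G s h ∧ ¬ ended G s h ∧ x ∈ G.V ∧ x ∉ h := by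
  have hle : ∀ k ≤ h.length, ¬ ended G s (h.take k) := by
    intro k hk
    have := hv.2.2 k (by simp; omega)
    rwa [List.take_append_of_le_length hk] at this
  refine ⟨⟨(List.nodup_append.mp hv.1).1, fun y hy => hv.2.1 y (by simp [hy]),
    fun k hk => hle k hk.le⟩, by simpa using hle h.length le_rfl, hv.2.1 x (by simp), ?_⟩
  intro hx
  exact (List.nodup_append.mp hv.1).2.2 x hx x (by simp) rfl

theorem follows_concat {s p : Player} {σ : Strategy} {h : List ℕ} {x : ℕ} :
    Follows s p σ (h ++ [x]) ↔ Follows s p σ h ∧ (mover s h.length = p → x = σ h) := by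
  constructor
  · intro hf
    refine ⟨fun k hk hm => ?_, fun hm => ?_⟩
    · have := hf k (by simp; omega) hm
      rwa [List.getD_append _ _ _ _ hk, List.take_append_of_le_length hk.le] at this
    · simpa using hf h.length (by simp) hm
  · rintro ⟨hf, hx⟩ k hk hm
    rw [List.length_append, List.length_singleton] at hk
    rw [List.take_append_of_le_length (by omega)]
    by_cases hlt : k < h.length
    · rw [List.getD_append _ _ _ _ hlt]
      exact hf k hlt hm
    · obtain rfl : k = h.length := by omega
      simpa using hx hm

theorem exists_mem_not_mem_of_length_lt {V : Finset ℕ} {h : List ℕ}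
    (hlt : h.length < V.card) : ∃ v ∈ V, v ∉ h := by
  obtain ⟨v, hv, hvh⟩ := Finset.exists_mem_notMem_of_card_lt_card
    ((List.toFinset_card_le h).trans_lt hlt)
  exact ⟨v, hv, by simpa using hvh⟩

theorem ValidHist.mem_of_length_eq {G : Game} {s : Player} {h : List ℕ} (hv : ValidHist G s h)
    (hlen : h.length = G.V.card) {v : ℕ} (hvV : v ∈ G.V) : v ∈ h := by
  have hsub : h.toFinset ⊆ G.V := fun x hx => hv.2.1 x (by simpa using hx)
  have := Finset.eq_of_subset_of_card_le hsub
    (by rw [List.toFinset_card_of_nodup hv.1, hlen])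
  rw [← this] at hvV
  simpa using hvV

open Classical in
/-- A property of positions that `p` can maintain yields a strategy maintaining it. -/
theorem exists_strategy_of_invariant (G : Game) (s p : Player)
    (J : Player → Finset ℕ → Finset ℕ → Prop) (h0 : J s ∅ ∅)
    (hp : ∀ A B, J p A B → ¬ fills (G.edges p) A → ¬ fills (G.edges p.other) B →
      (∃ v ∈ G.V, v ∉ A ∧ v ∉ B) →
      ∃ v ∈ G.V, v ∉ A ∧ v ∉ B ∧ J p.other (insert v A) B)
    (ho : ∀ A B, J p.other A B → ¬ fills (G.edges p) A → ¬ fills (G.edges p.other) B →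
      ∀ v ∈ G.V, v ∉ A → v ∉ B → J p A (insert v B)) :
    ∃ σ : Strategy, Legal G s p σ ∧ ∀ h, ValidHist G s h → Follows s p σ h →
      J (mover s h.length) (picked s p h) (picked s p.other h) := by
  let good : List ℕ → ℕ → Prop := fun h v => v ∈ G.V ∧ v ∉ picked s p h ∧
    v ∉ picked s p.other h ∧ J p.other (insert v (picked s p h)) (picked s p.other h)
  let σ : Strategy := fun h => if hex : ∃ v, good h v then hex.choose else 0
  have hσ : ∀ h, (∃ v, good h v) → good h (σ h) := by
    intro h hex
    simp only [σ, dif_pos hex]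
    exact hex.choose_spec
  have hgood : ∀ h, ¬ ended G s h → (∃ v ∈ G.V, v ∉ h) → mover s h.length = p →
      J (mover s h.length) (picked s p h) (picked s p.other h) → good h (σ h) := by
    intro h hend ⟨v, hv, hvh⟩ hm hJ
    rw [ended_iff G s p, not_or] at hend
    rw [mem_iff_mem_picked s p, not_or] at hvh
    exact hσ h (hp _ _ (hm ▸ hJ) hend.1 hend.2 ⟨v, hv, hvh⟩)
  have hinv : ∀ h, ValidHist G s h → Follows s p σ h →
      J (mover s h.length) (picked s p h) (picked s p.other h) := by
    intro h
    induction h using List.reverseRecOn with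
    | nil => intro _ _; simpa [mover] using h0
    | append_singleton h x ih =>
      intro hv hf
      obtain ⟨hv, hend, hx, hxh⟩ := hv.of_concat
      rw [follows_concat] at hf
      have hJ := ih hv hf.1
      rw [picked_concat, picked_concat, List.length_append, List.length_singleton, mover_succ]
      by_cases hm : mover s h.length = p
      · rw [if_pos hm, if_neg (by rw [hm]; exact p.other_ne.symm), hm, hf.2 hm]
        exact (hgood h hend ⟨x, hx, hxh⟩ hm hJ).2.2.2
      · have hm' := Player.eq_other_of_ne hm
        rw [if_neg hm, if_pos hm', hm', Player.other_other]
        rw [ended_iff G s p, not_or] at hend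
        rw [mem_iff_mem_picked s p, not_or] at hxh
        exact ho _ _ (hm' ▸ hJ) hend.1 hend.2 x hx hxh.1 hxh.2
  refine ⟨σ, fun h hv hf hend hlt hm => ?_, hinv⟩
  obtain ⟨h1, h2, h3, -⟩ :=
    hgood h hend (exists_mem_not_mem_of_length_lt hlt) hm (hinv h hv hf)
  exact ⟨h1, by rw [mem_iff_mem_picked s p]; tauto⟩

/-- Player `p` forces a win from the start (passes allowed), when `s` moves first. -/
def ForcesFrom (G : Game) (s p : Player) : Prop :=
  if s = p then Forces G p ∅ ∅ else ForcesSecond G p ∅ ∅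

theorem ForcesFrom.winsAs {G : Game} {s p : Player} (h : ForcesFrom G s p) : WinsAs G s p := by
  obtain ⟨σ, hσ, hJ⟩ := exists_strategy_of_invariant G s p
    (fun q A B => if q = p then fills (G.edges p) A ∨ Forces G p A B else ForcesSecond G p A B)
    (by
      unfold ForcesFrom at h
      split_ifs at h ⊢
      · exact .inr h
      · exact h)
    (by
      intro A B hA hE _ _
      rw [if_pos rfl] at hA
      simp only [if_neg p.other_ne]
      exact (hA.resolve_left hE).exists_move)
    (by
      intro A B hA hE hF v hv hvA hvB
      rw [if_neg p.other_ne] at hA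
      rw [if_pos rfl]
      exact .inr ((hA.resolve_left hE).1 v hv hvA hvB))
  refine ⟨σ, hσ, fun h hv hf hc => ?_⟩
  by_contra hE
  have hJ := hJ h hv hf
  have hforces : Forces G p (picked s p h) (picked s p.other h) := by
    split_ifs at hJ
    · exact hJ.resolve_left hE
    · exact (hJ.resolve_left hE).2
  rcases hc with hc | hc
  · rw [ended_iff G s p] at hc
    exact hforces.not_fills (hc.resolve_left hE)
  · obtain ⟨v, hvV, hvA, hvB, -⟩ := hforces.exists_move
    have := hv.mem_of_length_eq hc hvV
    rw [mem_iff_mem_picked s p] at this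
    tauto

theorem exists_reply_of_not_forcesSecond {G : Game} (hG : WellFormed G) {p : Player}
    {A B : Finset ℕ} (h : ¬ ForcesSecond G p A B) (hav : ∃ v ∈ G.V, v ∉ A ∧ v ∉ B) :
    ∃ v ∈ G.V, v ∉ A ∧ v ∉ B ∧ ¬ Forces G p A (insert v B) := by
  by_contra! hcon
  obtain ⟨v, hv, hvA, hvB⟩ := hav
  refine h (.inr ⟨hcon, (hcon v hv hvA hvB).mono hG rfl ?_⟩)
  exact Finset.inter_subset_left.trans (Finset.subset_insert _ _)

theorem nonLosingAs_other_of_not_forcesFrom {G : Game} (hG : WellFormed G) {s p : Player}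
    (h : ¬ ForcesFrom G s p) : NonLosingAs G s p.other := by
  obtain ⟨σ, hσ, hJ⟩ := exists_strategy_of_invariant G s p.other
    (fun q B A => ¬ fills (G.edges p) A ∧
      if q = p then ¬ Forces G p A B else ¬ ForcesSecond G p A B)
    (by
      unfold ForcesFrom at h
      refine ⟨hG.not_fills_empty p, ?_⟩
      split_ifs at h ⊢ <;> exact h)
    (by
      intro B A hA _ _ hav
      rw [if_neg p.other_ne] at hA
      simp only [Player.other_other, if_true]
      obtain ⟨v, hv, hvA, hvB, hnf⟩ := exists_reply_of_not_forcesSecond hG hA.2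
        (let ⟨v, hv, hvB, hvA⟩ := hav; ⟨v, hv, hvA, hvB⟩)
      exact ⟨v, hv, hvB, hvA, hA.1, hnf⟩)
    (by
      intro B A hA hF hE v hv hvB hvA
      rw [Player.other_other, if_pos rfl] at hA
      rw [if_neg p.other_ne]
      have hnot : ¬ ForcesSecond G p (insert v A) B :=
        fun hs => hA.2 (Forces.of_move hG hF hv hvA hvB hs)
      exact ⟨fun hfill => hnot (.inl hfill), hnot⟩)
  refine ⟨σ, hσ, fun h hv hf _ => ?_⟩
  rw [Player.other_other]
  simpa using (hJ h hv hf).1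

theorem WinsAs.not_nonLosingAs_other {G : Game} {s p : Player} (hw : WinsAs G s p) :
    ¬ NonLosingAs G s p.other := by
  rintro ⟨τ, hτ, hτ'⟩
  obtain ⟨σ, hσ, hσ'⟩ := hw
  have hplay : ∀ n ≤ G.V.card, ∃ h, ValidHist G s h ∧ Follows s p σ h ∧
      Follows s p.other τ h ∧ (Complete G s h ∨ h.length = n) := by
    intro n
    induction n with
    | zero =>
      intro _
      exact ⟨[], ⟨by simp, by simp, by simp⟩, by simp [Follows], by simp [Follows], .inr rfl⟩
    | succ n ih =>
      intro hn
      obtain ⟨h, hv, hf, hf', hc⟩ := ih (by omega)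
      by_cases hcomp : Complete G s h
      · exact ⟨h, hv, hf, hf', .inl hcomp⟩
      have hlen := hc.resolve_left hcomp
      have hend : ¬ ended G s h := fun he => hcomp (.inl he)
      by_cases hm : mover s h.length = p
      · obtain ⟨h1, h2⟩ := hσ h hv hf hend (by omega) hm
        refine ⟨h ++ [σ h], hv.concat hend h1 h2, follows_concat.mpr ⟨hf, fun _ => rfl⟩,
          follows_concat.mpr ⟨hf', fun hm' => ?_⟩, .inr (by simp [hlen])⟩
        exact absurd (hm'.symm.trans hm) p.other_ne
      · have hm' := Player.eq_other_of_ne hm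
        obtain ⟨h1, h2⟩ := hτ h hv hf' hend (by omega) hm'
        exact ⟨h ++ [τ h], hv.concat hend h1 h2,
          follows_concat.mpr ⟨hf, fun hm'' => absurd hm'' hm⟩,
          follows_concat.mpr ⟨hf', fun _ => rfl⟩, .inr (by simp [hlen])⟩
  obtain ⟨h, hv, hf, hf', hc⟩ := hplay _ le_rfl
  have hc : Complete G s h := hc.elim id .inr
  have := hτ' h hv hf' hc
  rw [Player.other_other] at this
  exact this (hσ' h hv hf hc)

theorem WinsAs.forcesFrom {G : Game} (hG : WellFormed G) {s p : Player} (h : WinsAs G s p) :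
    ForcesFrom G s p :=
  by_contra fun hn => h.not_nonLosingAs_other (nonLosingAs_other_of_not_forcesFrom hG hn)

theorem NonLosingAs.not_forcesFrom {G : Game} {s p : Player} (h : NonLosingAs G s p.other) :
    ¬ ForcesFrom G s p :=
  fun hf => hf.winsAs.not_nonLosingAs_other h

/-! ### Disjoint unions -/

theorem gunion_comm (G G' : Game) : gunion G G' = gunion G' G := by
  simp [gunion, Finset.union_comm]

theorem fills_gunion {G G' : Game} {p : Player} {S : Finset ℕ} :
    fills ((gunion G G').edges p) S ↔ fills (G.edges p) S ∨ fills (G'.edges p) S := by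
  cases p <;> simp [fills, gunion, Game.edges, or_and_right, exists_or]

theorem WellFormed.gunion {G G' : Game} (hG : WellFormed G) (hG' : WellFormed G') :
    WellFormed (gunion G G') := by
  constructor <;> intro e he <;> rcases Finset.mem_union.mp he with he | he
  · exact ⟨(hG.1 e he).1.trans Finset.subset_union_left, (hG.1 e he).2⟩
  · exact ⟨(hG'.1 e he).1.trans Finset.subset_union_right, (hG'.1 e he).2⟩
  · exact ⟨(hG.2 e he).1.trans Finset.subset_union_left, (hG.2 e he).2⟩
  · exact ⟨(hG'.2 e he).1.trans Finset.subset_union_right, (hG'.2 e he).2⟩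

theorem insert_inter_eq {S T : Finset ℕ} {v : ℕ} (hv : v ∉ T) : insert v S ∩ T = S ∩ T :=
  Finset.insert_inter_of_notMem hv

/-- If the opponent answers in the component where `p` has just moved, `p` must already be
winning in one of the components. -/
theorem forcesSecond_or_forces {G G' : Game} (hG' : WellFormed G')
    {p : Player} {A B : Finset ℕ}
    (hr : ∀ w ∈ G.V, w ∉ A → w ∉ B → Forces G p A (insert w B) ∨ Forces G' p A (insert w B))
    (hp : Forces G p A B ∨ Forces G' p A B) : ForcesSecond G p A B ∨ Forces G' p A B := by
  by_contra! hcon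
  obtain ⟨h1, h2⟩ := hcon
  refine h1 (.inr ⟨fun w hw hwA hwB => (hr w hw hwA hwB).resolve_right fun h => h2 ?_,
    hp.resolve_right h2⟩)
  exact h.mono hG' rfl (Finset.inter_subset_left.trans (Finset.subset_insert _ _))

/-- If `p` wins the disjoint union moving first, then `p` wins some component moving first. -/
theorem ForcesWithin.of_gunion {G G' : Game} (hG : WellFormed G) (hG' : WellFormed G')
    (hdisj : Disjoint G.V G'.V) {p : Player} {n : ℕ} {A B : Finset ℕ}
    (h : ForcesWithin (gunion G G') p n A B) (hA : ¬ fills ((gunion G G').edges p) A) :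
    Forces G p A B ∨ Forces G' p A B := by
  have key : ∀ {H H' : Game}, WellFormed H → WellFormed H' → Disjoint H.V H'.V →
      ∀ {A B : Finset ℕ} {v : ℕ}, v ∈ H.V → v ∉ A → v ∉ B → ¬ fills (H.edges p.other) B →
      ¬ fills (H'.edges p) A →
      (fills (H.edges p) (insert v A) ∨ fills (H'.edges p) (insert v A) ∨
        ((∀ w ∈ H.V, w ∉ insert v A → w ∉ B →
          Forces H p (insert v A) (insert w B) ∨ Forces H' p (insert v A) (insert w B)) ∧
        (Forces H p (insert v A) B ∨ Forces H' p (insert v A) B))) →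
      Forces H p A B ∨ Forces H' p A B := by
    intro H H' hH hH' hd A B v hv hvA hvB hF hE h
    have hvH' : v ∉ H'.V := Finset.disjoint_left.mp hd hv
    rcases h with h | h | ⟨hr, hp⟩
    · exact .inl (.of_move hH hF hv hvA hvB (.inl h))
    · refine absurd (hH'.fills_of_inter_subset ?_ h) hE
      rw [insert_inter_eq hvH']
      exact Finset.inter_subset_left
    · rcases forcesSecond_or_forces hH' hr hp with h | h
      · exact .inl (.of_move hH hF hv hvA hvB h)
      · exact .inr (h.mono hH' (insert_inter_eq hvH') Finset.inter_subset_left)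
  induction h with
  | win hF hv hvA hvB hfill =>
    rw [fills_gunion] at hF hfill hA
    rcases Finset.mem_union.mp hv with hv | hv
    · exact key hG hG' hdisj hv hvA hvB (by tauto) (by tauto) (by tauto)
    · exact (key hG' hG hdisj.symm hv hvA hvB (by tauto) (by tauto) (by tauto)).symm
  | @move n A B v hF hv hvA hvB _ _ ih ihp =>
    by_cases hA' : fills ((gunion G G').edges p) (insert v A)
    · rw [fills_gunion] at hF hA' hA
      rcases Finset.mem_union.mp hv with hv | hv
      · exact key hG hG' hdisj hv hvA hvB (by tauto) (by tauto) (by tauto)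
      · exact (key hG' hG hdisj.symm hv hvA hvB (by tauto) (by tauto) (by tauto)).symm
    · rw [fills_gunion] at hF hA
      rcases Finset.mem_union.mp hv with hv | hv
      · exact key hG hG' hdisj hv hvA hvB (by tauto) (by tauto) (.inr (.inr
          ⟨fun w hw hwA hwB => ih w (Finset.mem_union_left _ hw) hwA hwB hA', ihp hA'⟩))
      · exact (key hG' hG hdisj.symm hv hvA hvB (by tauto) (by tauto) (.inr (.inr
          ⟨fun w hw hwA hwB => (ih w (Finset.mem_union_right _ hw) hwA hwB hA').symm,
            (ihp hA').symm⟩))).symm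

theorem not_forcesFrom_gunion_other {G G' : Game} (hG : WellFormed G) (hG' : WellFormed G')
    (hdisj : Disjoint G.V G'.V) {p : Player} (h : ¬ ForcesFrom G p.other p)
    (h' : ¬ ForcesFrom G' p p) : ¬ ForcesFrom (gunion G G') p.other p := by
  simp only [ForcesFrom, if_neg p.other_ne, if_true] at h h' ⊢
  have hne := (hG.gunion hG').not_fills_empty p
  rintro (hs | ⟨hr, m, hm⟩)
  · exact hne hs
  · refine (forcesSecond_or_forces hG' (fun w hw hwA hwB => ?_)
      (hm.of_gunion hG hG' hdisj hne)).elim h h'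
    obtain ⟨k, hk⟩ := hr w (Finset.mem_union_left _ hw) hwA hwB
    exact hk.of_gunion hG hG' hdisj hne

/-- Racing: on `G`, the player `p` has just moved and wins within `m + 1` passes, while on `G'`
the opponent, moving first, cannot win within `m` passes. Then `p` wins the union. -/
theorem forcesSecond_gunion {G G' : Game} (hG : WellFormed G) (hG' : WellFormed G')
    (hdisj : Disjoint G.V G'.V) {p : Player} (m : ℕ) (A B : Finset ℕ)
    (hr : ∀ w ∈ G.V, w ∉ A → w ∉ B → ForcesWithin G p (m + 1) A (insert w B))
    (hp : ForcesWithin G p m A B) (hB : ¬ fills (G'.edges p.other) B)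
    (h' : ¬ ForcesWithin G' p.other m B A) : ForcesSecond (gunion G G') p A B := by
  induction hk : ((gunion G G').V \ A).card using Nat.strong_induction_on
    generalizing m A B with
  | _ k ih =>
  subst hk
  have hGU := hG.gunion hG'
  have hcard : ∀ v ∈ (gunion G G').V, v ∉ A →
      ((gunion G G').V \ insert v A).card < ((gunion G G').V \ A).card := by
    intro v hv hvA
    refine Finset.card_lt_card ⟨Finset.sdiff_subset_sdiff le_rfl (Finset.subset_insert _ _), ?_⟩
    intro hsub
    have := hsub (Finset.mem_sdiff.mpr ⟨hv, hvA⟩)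
    simp at this
  -- `p` to move on `G`, winning within `n` passes
  have race : ∀ n B, ForcesWithin G p n A B → ¬ fills (G'.edges p.other) B →
      (∀ j, n = j + 1 → ¬ ForcesWithin G' p.other j B A) → Forces (gunion G G') p A B := by
    intro n B hn hB hj
    have hB' : ¬ fills ((gunion G G').edges p.other) B := by
      rw [fills_gunion]
      exact not_or.mpr ⟨hn.not_fills, hB⟩
    cases hn with
    | win hF hv hvA hvB hfill =>
      exact .of_move hGU hB' (Finset.mem_union_left _ hv) hvA hvB
        (.inl (fills_gunion.mpr (.inl hfill)))
    | @move j _ _ v hF hv hvA hvB hr hp =>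
      have hvU : v ∈ (gunion G G').V := Finset.mem_union_left _ hv
      refine .of_move hGU hB' hvU hvA hvB (ih _ (hcard v hvU hvA) j _ _ hr hp hB ?_ rfl)
      refine fun hf => hj j rfl (hf.mono hG' le_rfl rfl ?_)
      rw [← insert_inter_eq (S := A) (Finset.disjoint_left.mp hdisj hv)]
      exact Finset.inter_subset_left
  by_cases hA : fills ((gunion G G').edges p) A
  · exact .inl hA
  rw [fills_gunion, not_or] at hA
  refine .inr ⟨fun w hw hwA hwB => ?_, race m B hp hB fun j hj hf => h' ?_⟩
  · rcases Finset.mem_union.mp hw with hw | hw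
    · have hwG' := Finset.disjoint_left.mp hdisj hw
      have hsub : insert w B ∩ G'.V ⊆ B := by
        rw [insert_inter_eq hwG']
        exact Finset.inter_subset_left
      refine race (m + 1) _ (hr w hw hwA hwB)
        (fun hf => hB (hG'.fills_of_inter_subset hsub hf)) fun j hj hf => h' ?_
      obtain rfl : m = j := by omega
      exact hf.mono hG' le_rfl (insert_inter_eq hwG') Finset.inter_subset_left
    · have hwG : w ∉ G.V := Finset.disjoint_right.mp hdisj hw
      have hsub : insert w B ∩ G.V ⊆ B := by
        rw [insert_inter_eq hwG]
        exact Finset.inter_subset_left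
      have hE' : ¬ fills (G'.edges p.other.other) A := by
        rw [Player.other_other]
        exact hA.2
      have hfill : ¬ fills (G'.edges p.other) (insert w B) :=
        fun hf => h' (.win hE' hw hwB hwA hf)
      have hpw : ForcesWithin G p m A (insert w B) := hp.mono hG le_rfl rfl hsub
      by_cases hpass : ∀ j, m = j + 1 → ¬ ForcesWithin G' p.other j (insert w B) A
      · exact race m _ hpw hfill hpass
      push Not at hpass
      obtain ⟨j, rfl, hj⟩ := hpass
      by_cases hans : ∀ v ∈ G'.V, v ∉ insert w B → v ∉ A →
          ForcesWithin G' p.other (j + 1) (insert w B) (insert v A)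
      · exact absurd (.move hE' hw hwB hwA hans hj) h'
      push Not at hans
      obtain ⟨v, hv, hvB, hvA, hnf⟩ := hans
      have hvU : v ∈ (gunion G G').V := Finset.mem_union_right _ hv
      have hvG : v ∉ G.V := Finset.disjoint_right.mp hdisj hv
      have hAv : A ∩ G.V = insert v A ∩ G.V := (insert_inter_eq hvG).symm
      refine .of_move hGU ?_ hvU hvA hvB
        (ih _ (hcard v hvU hvA) (j + 1) _ _ ?_ (hpw.mono hG le_rfl hAv Finset.inter_subset_left)
          hfill hnf rfl)
      · rw [fills_gunion]
        exact not_or.mpr ⟨hpw.not_fills, hfill⟩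
      · intro u hu huA huB
        refine (hr u hu (fun h => huA (Finset.mem_insert_of_mem h))
          (fun h => huB (Finset.mem_insert_of_mem h))).mono hG le_rfl hAv ?_
        rw [Finset.insert_inter_of_mem hu, insert_inter_eq hwG]
        exact Finset.insert_subset_insert _ Finset.inter_subset_left
  · subst hj
    exact hf.mono hG' (Nat.le_succ j) rfl Finset.inter_subset_left

theorem forces_gunion {G G' : Game} (hG : WellFormed G) (hG' : WellFormed G')
    (hdisj : Disjoint G.V G'.V) {p : Player} {n : ℕ} (h : ForcesWithin G p n ∅ ∅)
    (h' : ∀ m < n, ¬ ForcesWithin G' p.other m ∅ ∅) : Forces (gunion G G') p ∅ ∅ := by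
  have hGU := hG.gunion hG'
  cases h with
  | win hF hv hvA hvB hfill =>
    exact .of_move hGU (hGU.not_fills_empty _) (Finset.mem_union_left _ hv) hvA hvB
      (.inl (fills_gunion.mpr (.inl hfill)))
  | @move j _ _ v hF hv hvA hvB hr hp =>
    refine .of_move hGU (hGU.not_fills_empty _) (Finset.mem_union_left _ hv) hvA hvB
      (forcesSecond_gunion hG hG' hdisj j _ _ hr hp (hG'.not_fills_empty _) ?_)
    refine fun hf => h' j (Nat.lt_succ_self j) (hf.mono hG' le_rfl rfl ?_)
    simp

/-- When each player wins one component moving first, some player wins the union moving first. -/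
theorem forces_gunion_or {G G' : Game} (hG : WellFormed G) (hG' : WellFormed G')
    (hdisj : Disjoint G.V G'.V) {p : Player} (h : Forces G p ∅ ∅)
    (h' : Forces G' p.other ∅ ∅) :
    Forces (gunion G G') p ∅ ∅ ∨ Forces (gunion G G') p.other ∅ ∅ := by
  classical
  rcases le_total (Nat.find h) (Nat.find h') with hle | hle
  · exact .inl (forces_gunion hG hG' hdisj (Nat.find_spec h)
      fun m hm => Nat.find_min h' (hm.trans_le hle))
  · refine .inr ?_
    rw [gunion_comm]
    refine forces_gunion hG' hG hdisj.symm (Nat.find_spec h') fun m hm => ?_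
    rw [Player.other_other]
    exact Nat.find_min h (hm.trans_le hle)

/-- If `o(G) = L⁻` and `o(G') = R⁻`, then `o(G ∪ G') ∈ {L⁻, N, R⁻}`. -/
theorem union_Lminus_Rminus (G G' : Game) (hG : WellFormed G) (hG' : WellFormed G')
    (hdisj : Disjoint G.V G'.V)
    (hGo : hasOutcome G oLminus) (hG'o : hasOutcome G' oRminus) :
    ∃ o : Outcome, hasOutcome (gunion G G') o ∧ (o = oLminus ∨ o = oN ∨ o = oRminus) := by
  obtain ⟨hL, hdraw⟩ : WinsAs G .L .L ∧ NonLosingAs G .R .L ∧ NonLosingAs G .R .R := hGo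
  obtain ⟨hdraw', hR⟩ : (NonLosingAs G' .L .L ∧ NonLosingAs G' .L .R) ∧ WinsAs G' .R .R := hG'o
  have hGU := hG.gunion hG'
  have hLsafe : NonLosingAs (gunion G G') .L .L := by
    refine nonLosingAs_other_of_not_forcesFrom (p := .R) hGU ?_
    rw [gunion_comm]
    exact not_forcesFrom_gunion_other (p := .R) hG' hG hdisj.symm
      (NonLosingAs.not_forcesFrom (p := .R) hdraw'.1)
      (NonLosingAs.not_forcesFrom (p := .R) hdraw.1)
  have hRsafe : NonLosingAs (gunion G G') .R .R :=
    nonLosingAs_other_of_not_forcesFrom (p := .L) hGU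
      (not_forcesFrom_gunion_other (p := .L) hG hG' hdisj
        (NonLosingAs.not_forcesFrom (p := .L) hdraw.2)
        (NonLosingAs.not_forcesFrom (p := .L) hdraw'.2))
  have hwin : ForcesFrom (gunion G G') .L .L ∨ ForcesFrom (gunion G G') .R .R :=
    forces_gunion_or (p := .L) hG hG' hdisj (hL.forcesFrom hG) (hR.forcesFrom hG')
  by_cases h1 : ForcesFrom (gunion G G') .L .L
  · by_cases h2 : ForcesFrom (gunion G G') .R .R
    · exact ⟨oN, ⟨h1.winsAs, h2.winsAs⟩, .inr (.inl rfl)⟩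
    · exact ⟨oLminus, ⟨h1.winsAs,
        nonLosingAs_other_of_not_forcesFrom (p := .R) hGU h2, hRsafe⟩, .inl rfl⟩
  · exact ⟨oRminus, ⟨⟨hLsafe, nonLosingAs_other_of_not_forcesFrom (p := .L) hGU h1⟩,
      (hwin.resolve_left h1).winsAs⟩, .inr (.inr rfl)⟩

end APG
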